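/- Let Q, N ≥ 1 be real numbers and let S be a finite multiset of elements of ℤ[i] \ {0}. For i = 1, 2 let Φ_i : ℝ → ℝ_{>0} be smooth functions of rapid decay with Φ_i(x) ≥ c > 0 whenever |x| ≤ 1, and set Ψ_i(z) := Φ_i(N(z)) for z ∈ ℂ. Define K := max over q1 ∈ S with Q/2 < N(q1) ≤ Q and reduced residues r1 mod q1 of the number of pairs (r2, q2) with q2 ∈ S, Q/2 < N(q2) ≤ Q, r2 a reduced residue mod q2, and N(r1 q2 − r2 q1) ≤ 2 N^{−1} N(q1) N(q2). Then K ≤ C · max_{q1∈S, Q/2<N(q1)≤Q, (r1,q1)=1} ∑_{q2∈S} Ψ_2(q2/√Q) · ∑_{b∈ℤ[i], b ≡ r1 q2 (mod q1)} Ψ_1(b√N/(|q1|√(2Q))), where C depends only on Φ_1, Φ_2 and c. -/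

import Mathlib

noncomputable section

open scoped Classical

/-- The norm of a Gaussian integer, as a real number. -/
def gN (z : GaussianInt) : ℝ := (z.re : ℝ) ^ 2 + (z.im : ℝ) ^ 2

/-- The norm form on `ℂ`: `N(z) = (Re z)² + (Im z)²`. -/
def cN (z : ℂ) : ℝ := z.re ^ 2 + z.im ^ 2

/-!
If `r₂/q₂` is counted against `r₁/q₁`, then `b = r₁q₂ - r₂q₁` lies in the class of `r₁q₂` modulo
`q₁` and `N(b) · N / (2 Q N(q₁)) ≤ N(q₂) / Q ≤ 1`, so `b` contributes at least `c` to the inner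
smoothed sum, which converges by the decay of `Φ₁`; distinct `r₂` give distinct `b`. The outer
weight is at least `c` as well, so `C = c⁻²` works.
-/

section OrderedSums

theorem sum_map_filter_le_sum_map {α M : Type*} [AddCommMonoid M] [PartialOrder M]
    [IsOrderedAddMonoid M] {p : α → Prop} [DecidablePred p] {s : Multiset α} {f g : α → M}
    (hfg : ∀ a ∈ s, p a → f a ≤ g a) (hg : ∀ a ∈ s, ¬ p a → 0 ≤ g a) :
    ((s.filter p).map f).sum ≤ (s.map g).sum := by
  have hout : 0 ≤ ((s.filter fun a => ¬ p a).map g).sum :=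
    Multiset.sum_nonneg <| by
      simpa only [Multiset.forall_mem_map_iff, Multiset.mem_filter, and_imp] using hg
  calc ((s.filter p).map f).sum
      ≤ ((s.filter p).map g).sum := Multiset.sum_map_le_sum_map _ _ <| by
        simpa only [Multiset.mem_filter, and_imp] using hfg
    _ ≤ ((s.filter p).map g).sum + ((s.filter fun a => ¬ p a).map g).sum :=
        le_add_of_nonneg_right hout
    _ = (s.map g).sum := by
        rw [← Multiset.sum_add, ← Multiset.map_add, Multiset.filter_add_not]

theorem natCard_mul_le_tsum_of_injective {α β : Type*} [Finite α] {f : β → ℝ} {c : ℝ}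
    (hf : Summable f) (hf₀ : ∀ b, 0 ≤ f b) {F : α → β} (hF : Function.Injective F)
    (hc : ∀ a, c ≤ f (F a)) : Nat.card α * c ≤ ∑' b, f b := by
  calc Nat.card α * c = ∑' _ : α, c := by rw [tsum_const, nsmul_eq_mul]
    _ ≤ ∑' b, f b :=
      Summable.tsum_le_tsum_of_inj F hF (fun b _ => hf₀ b) hc (.of_finite) hf

theorem natCast_sSup_le_mul_sSup {M : Set ℕ} {V : Set ℝ} {C : ℝ} (hM : BddAbove M)
    (hV : BddAbove V) (hC : 0 ≤ C) (hV₀ : ∀ v ∈ V, 0 ≤ v)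
    (h : ∀ m ∈ M, ∃ v ∈ V, (m : ℝ) ≤ C * v) : ((sSup M : ℕ) : ℝ) ≤ C * sSup V := by
  rcases M.eq_empty_or_nonempty with rfl | hne
  · simpa using mul_nonneg hC (Real.sSup_nonneg hV₀)
  · obtain ⟨v, hv, hle⟩ := h _ (Nat.sSup_mem hne hM)
    exact hle.trans (mul_le_mul_of_nonneg_left (le_csSup hV hv) hC)

end OrderedSums

section GaussianNorm

theorem gN_eq_normSq (z : GaussianInt) : gN z = Complex.normSq z := by
  rw [Complex.normSq_apply, ← GaussianInt.intCast_re, ← GaussianInt.intCast_im, gN, sq, sq]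

theorem cN_eq_normSq (z : ℂ) : cN z = Complex.normSq z := by
  rw [Complex.normSq_apply, cN, sq, sq]

theorem gN_nonneg (z : GaussianInt) : 0 ≤ gN z :=
  (gN_eq_normSq z).symm ▸ Complex.normSq_nonneg _

theorem gN_pos {z : GaussianInt} : 0 < gN z ↔ z ≠ 0 := by
  rw [gN_eq_normSq, Complex.normSq_pos, ne_eq, GaussianInt.toComplex_eq_zero]

theorem cN_div_sqrt (z : GaussianInt) {Q : ℝ} (hQ : 0 ≤ Q) :
    cN ((z : ℂ) / (Real.sqrt Q : ℝ)) = gN z / Q := by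
  rw [cN_eq_normSq, Complex.normSq_div, Complex.normSq_ofReal, Real.mul_self_sqrt hQ, gN_eq_normSq]

theorem cN_mul_sqrt_div (z : GaussianInt) {a b d : ℝ} (ha : 0 ≤ a) (hb : 0 ≤ b) (hd : 0 ≤ d) :
    cN ((z : ℂ) * (Real.sqrt a : ℝ) / ((Real.sqrt b : ℝ) * (Real.sqrt d : ℝ)))
      = gN z * (a / (b * d)) := by
  simp only [cN_eq_normSq, Complex.normSq_div, Complex.normSq_mul, Complex.normSq_ofReal,
    Real.mul_self_sqrt ha, Real.mul_self_sqrt hb, Real.mul_self_sqrt hd, gN_eq_normSq,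
    mul_div_assoc]

end GaussianNorm

section Lattice

/-- The coordinates `(re, im)` of a Gaussian integer, identifying `ℤ[i]` with the lattice `ℤ²`. The
target is `Fin 2 → ℤ` because lattice sums are available there, for the sup norm. -/
def gaussianIntCoords : GaussianInt ≃ₗ[ℤ] (Fin 2 → ℤ) where
  toFun z := ![z.re, z.im]
  invFun v := ⟨v 0, v 1⟩
  map_add' z w := by ext i; fin_cases i <;> simp
  map_smul' n z := by ext i; fin_cases i <;> simp
  left_inv z := rfl
  right_inv v := by ext i; fin_cases i <;> rfl

theorem gaussianIntCoords_apply (z : GaussianInt) : gaussianIntCoords z = ![z.re, z.im] := rfl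

instance : Module.Finite ℤ GaussianInt := .equiv gaussianIntCoords.symm

theorem finite_quotient_span_singleton {q : GaussianInt} (hq : q ≠ 0) :
    Finite (GaussianInt ⧸ Ideal.span {q}) :=
  have := Ring.HasFiniteQuotients.of_module_finite ℤ GaussianInt
  Ring.HasFiniteQuotients.finiteQuotient (by simpa using hq)

theorem finite_setOf_reduced_residue_values {α : Type*} (S : Multiset GaussianInt)
    {P : GaussianInt → Prop} (hP : ∀ q, P q → q ≠ 0)
    (f : (q : GaussianInt) → (GaussianInt ⧸ Ideal.span {q})ˣ → α) :
    {x : α | ∃ q ∈ S, P q ∧ ∃ u : (GaussianInt ⧸ Ideal.span {q})ˣ, x = f q u}.Finite := by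
  refine ((S.toFinset.filter P).finite_toSet.biUnion (t := fun q => Set.range (f q))
    fun q hq => ?_).subset ?_
  · have := finite_quotient_span_singleton (hP q (Finset.mem_filter.1 hq).2)
    exact Set.finite_range _
  · rintro _ ⟨q, hqS, hq, u, rfl⟩
    exact Set.mem_biUnion (Finset.mem_filter.2 ⟨Multiset.mem_toFinset.2 hqS, hq⟩) ⟨u, rfl⟩

theorem sq_norm_gaussianIntCoords_le_gN (z : GaussianInt) : ‖gaussianIntCoords z‖ ^ 2 ≤ gN z := by
  have hcoord : ‖gaussianIntCoords z‖ ≤ Real.sqrt (gN z) := by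
    refine (pi_norm_le_iff_of_nonneg (Real.sqrt_nonneg _)).2 fun i => Real.le_sqrt_of_sq_le ?_
    fin_cases i
    · simpa [gaussianIntCoords_apply, gN, Int.norm_eq_abs] using sq_nonneg (z.im : ℝ)
    · simpa [gaussianIntCoords_apply, gN, Int.norm_eq_abs] using sq_nonneg (z.re : ℝ)
  calc ‖gaussianIntCoords z‖ ^ 2 ≤ Real.sqrt (gN z) ^ 2 := by gcongr
    _ = gN z := Real.sq_sqrt (gN_nonneg z)

theorem summable_gN_rpow {k : ℝ} (hk : 1 < k) :
    Summable fun z : GaussianInt => gN z ^ (-k) := by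
  have hlattice : Summable fun z : GaussianInt => ‖gaussianIntCoords z‖ ^ (-(2 * k)) :=
    (EisensteinSeries.summable_one_div_norm_rpow (by linarith)).comp_injective
      gaussianIntCoords.injective
  refine hlattice.of_norm_bounded_eventually ?_
  filter_upwards [(Set.finite_singleton (0 : GaussianInt)).compl_mem_cofinite] with z hz
  have hnorm : 0 < ‖gaussianIntCoords z‖ :=
    norm_pos_iff.2 ((map_ne_zero_iff _ gaussianIntCoords.injective).2 hz)
  rw [Real.norm_of_nonneg (Real.rpow_nonneg (gN_nonneg z) _)]
  calc gN z ^ (-k) ≤ (‖gaussianIntCoords z‖ ^ 2) ^ (-k) :=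
        Real.rpow_le_rpow_of_nonpos (by positivity) (sq_norm_gaussianIntCoords_le_gN z)
          (by linarith)
    _ = ‖gaussianIntCoords z‖ ^ (-(2 * k)) := by
        rw [← Real.rpow_natCast_mul hnorm.le]
        norm_num

theorem summable_comp_gN_mul {Φ : ℝ → ℝ} {k A t : ℝ} (hΦ : ∀ x, 0 ≤ Φ x) (hk : 1 < k)
    (hdecay : ∀ x, Φ x ≤ A * (1 + |x|) ^ (-k)) (ht : 0 < t) :
    Summable fun z : GaussianInt => Φ (gN z * t) := by
  have hA : 0 ≤ A := by simpa using (hΦ 0).trans (hdecay 0)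
  refine ((summable_gN_rpow hk).mul_right (t ^ (-k)) |>.mul_left A).of_norm_bounded_eventually ?_
  filter_upwards [(Set.finite_singleton (0 : GaussianInt)).compl_mem_cofinite] with z hz
  have hpos : 0 < gN z * t := mul_pos (gN_pos.2 hz) ht
  rw [Real.norm_of_nonneg (hΦ _)]
  calc Φ (gN z * t) ≤ A * (1 + |gN z * t|) ^ (-k) := hdecay _
    _ ≤ A * (gN z * t) ^ (-k) := by
        refine mul_le_mul_of_nonneg_left (Real.rpow_le_rpow_of_nonpos hpos ?_ (by linarith)) hA
        linarith [le_abs_self (gN z * t)]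
    _ = A * (gN z ^ (-k) * t ^ (-k)) := by rw [Real.mul_rpow (gN_nonneg z) ht.le]

end Lattice

section Counting

/-- The number of pairs `(r₂, q₂)` counted against the fraction `r₁ / q₁`: `q₂` runs over the
members of `S` (with multiplicity) in the window `Q / 2 < N(q₂) ≤ Q`, and `r₂` over the
representatives `rep q₂ u₂` of the reduced residues modulo `q₂`. -/
def closeFractionCount (rep : (q : GaussianInt) → (GaussianInt ⧸ Ideal.span {q})ˣ → GaussianInt)
    (Q N : ℝ) (S : Multiset GaussianInt) (q1 r1 : GaussianInt) : ℕ :=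
  ((S.filter (fun q2 => Q / 2 < gN q2 ∧ gN q2 ≤ Q)).map
    (fun q2 => Nat.card {u2 : (GaussianInt ⧸ Ideal.span {q2})ˣ //
      gN (r1 * q2 - rep q2 u2 * q1) ≤ 2 * N⁻¹ * gN q1 * gN q2})).sum

/-- The inner smoothed sum `∑ Ψ(b √N / (|q| √(2Q)))` over the residue class `b ≡ a (mod q)`, where
`Ψ = Φ ∘ N`. -/
def smoothedClassSum (Φ : ℝ → ℝ) (Q N : ℝ) (q a : GaussianInt) : ℝ :=
  ∑' b : {b : GaussianInt // q ∣ b - a},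
    Φ (cN (((b : GaussianInt) : ℂ) * (Real.sqrt N : ℝ)
      / ((Real.sqrt (gN q) : ℝ) * (Real.sqrt (2 * Q) : ℝ))))

/-- The doubly smoothed sum attached to `r₁ / q₁`, the majorant of `closeFractionCount`. -/
def smoothedSum (Φ₁ Φ₂ : ℝ → ℝ) (Q N : ℝ) (S : Multiset GaussianInt) (q1 r1 : GaussianInt) : ℝ :=
  (S.map (fun q2 : GaussianInt =>
    Φ₂ (cN ((q2 : ℂ) / (Real.sqrt Q : ℝ))) * smoothedClassSum Φ₁ Q N q1 (r1 * q2))).sum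

variable {Φ₁ Φ₂ : ℝ → ℝ} {c k A Q N : ℝ}

theorem smoothedClassSum_nonneg (hΦ₁ : ∀ x, 0 ≤ Φ₁ x) (q a : GaussianInt) :
    0 ≤ smoothedClassSum Φ₁ Q N q a :=
  tsum_nonneg fun _ => hΦ₁ _

theorem smoothedSum_nonneg (hΦ₁ : ∀ x, 0 ≤ Φ₁ x) (hΦ₂ : ∀ x, 0 ≤ Φ₂ x)
    (S : Multiset GaussianInt) (q1 r1 : GaussianInt) : 0 ≤ smoothedSum Φ₁ Φ₂ Q N S q1 r1 :=
  Multiset.sum_nonneg <| Multiset.forall_mem_map_iff.2 fun _ _ =>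
    mul_nonneg (hΦ₂ _) (smoothedClassSum_nonneg hΦ₁ _ _)

theorem natCard_close_mul_le_smoothedClassSum {α : Type*} [Finite α] {r : α → GaussianInt}
    (hr : Function.Injective r) (hΦ₁ : ∀ x, 0 ≤ Φ₁ x) (hk : 1 < k)
    (hdecay : ∀ x, Φ₁ x ≤ A * (1 + |x|) ^ (-k)) (hlow : ∀ x, |x| ≤ 1 → c ≤ Φ₁ x)
    (hQ : 0 < Q) (hN : 0 < N) {q1 q2 : GaussianInt} (hq1 : q1 ≠ 0) (hq2 : gN q2 ≤ Q)
    (r1 : GaussianInt) :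
    Nat.card {a : α // gN (r1 * q2 - r a * q1) ≤ 2 * N⁻¹ * gN q1 * gN q2} * c
      ≤ smoothedClassSum Φ₁ Q N q1 (r1 * q2) := by
  have hgq1 : 0 < gN q1 := gN_pos.2 hq1
  set t : ℝ := N / (gN q1 * (2 * Q)) with ht_def
  have ht : 0 < t := by positivity
  have hscale (b : GaussianInt) := cN_mul_sqrt_div b hN.le hgq1.le (mul_pos two_pos hQ).le
  simp only [smoothedClassSum, hscale, ← ht_def]
  let diff : {a : α // gN (r1 * q2 - r a * q1) ≤ 2 * N⁻¹ * gN q1 * gN q2} →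
      {b : GaussianInt // q1 ∣ b - r1 * q2} :=
    fun a => ⟨r1 * q2 - r a * q1, ⟨-r a, by ring⟩⟩
  have hdiff : Function.Injective diff := fun a a' h =>
    Subtype.ext <| hr <| mul_right_cancel₀ hq1 <| sub_right_injective <| congrArg Subtype.val h
  have hsummable : Summable fun b : {b : GaussianInt // q1 ∣ b - r1 * q2} => Φ₁ (gN b.1 * t) :=
    (summable_comp_gN_mul hΦ₁ hk hdecay ht).comp_injective Subtype.val_injective
  refine natCard_mul_le_tsum_of_injective hsummable (fun _ => hΦ₁ _) hdiff fun a => hlow _ ?_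
  rw [abs_of_nonneg (mul_nonneg (gN_nonneg _) ht.le)]
  calc gN (r1 * q2 - r a * q1) * t ≤ 2 * N⁻¹ * gN q1 * gN q2 * t := by gcongr; exact a.2
    _ ≤ 2 * N⁻¹ * gN q1 * Q * t := by gcongr
    _ = 1 := by rw [ht_def]; field_simp

theorem closeFractionCount_mul_le_smoothedSum
    {rep : (q : GaussianInt) → (GaussianInt ⧸ Ideal.span {q})ˣ → GaussianInt}
    (hrep : ∀ q, Function.Injective (rep q)) (hc : 0 ≤ c)
    (hΦ₁ : ∀ x, 0 ≤ Φ₁ x) (hΦ₂ : ∀ x, 0 ≤ Φ₂ x) (hk : 1 < k)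
    (hdecay : ∀ x, Φ₁ x ≤ A * (1 + |x|) ^ (-k))
    (hlow₁ : ∀ x, |x| ≤ 1 → c ≤ Φ₁ x) (hlow₂ : ∀ x, |x| ≤ 1 → c ≤ Φ₂ x)
    (hQ : 0 < Q) (hN : 0 < N) (S : Multiset GaussianInt) {q1 : GaussianInt} (hq1 : q1 ≠ 0)
    (r1 : GaussianInt) :
    closeFractionCount rep Q N S q1 r1 * (c * c) ≤ smoothedSum Φ₁ Φ₂ Q N S q1 r1 := by
  rw [closeFractionCount, Nat.cast_multiset_sum, Multiset.map_map, ← Multiset.sum_map_mul_right]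
  refine sum_map_filter_le_sum_map (fun q2 _ hwindow => ?_)
    (fun q2 _ _ => mul_nonneg (hΦ₂ _) (smoothedClassSum_nonneg hΦ₁ _ _))
  have hq2 : q2 ≠ 0 := gN_pos.1 ((half_pos hQ).trans hwindow.1)
  have := finite_quotient_span_singleton hq2
  have houter : c ≤ Φ₂ (cN ((q2 : ℂ) / (Real.sqrt Q : ℝ))) := by
    refine hlow₂ _ ?_
    rw [cN_div_sqrt q2 hQ.le, abs_of_nonneg (div_nonneg (gN_nonneg q2) hQ.le)]
    exact (div_le_one hQ).2 hwindow.2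
  have hinner := natCard_close_mul_le_smoothedClassSum (hrep q2) hΦ₁ hk hdecay hlow₁ hQ hN hq1
    hwindow.2 r1
  rw [Function.comp_apply, mul_left_comm]
  exact mul_le_mul houter hinner (mul_nonneg (Nat.cast_nonneg _) hc) (hΦ₂ _)

end Counting

theorem counting_bounded_by_smoothed_sums_general {Φ₁ Φ₂ : ℝ → ℝ} {c k A Q N : ℝ} (hc : 0 < c)
    (hΦ₁ : ∀ x, 0 ≤ Φ₁ x) (hΦ₂ : ∀ x, 0 ≤ Φ₂ x) (hk : 1 < k)
    (hdecay : ∀ x, Φ₁ x ≤ A * (1 + |x|) ^ (-k))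
    (hlow₁ : ∀ x, |x| ≤ 1 → c ≤ Φ₁ x) (hlow₂ : ∀ x, |x| ≤ 1 → c ≤ Φ₂ x)
    (hQ : 0 < Q) (hN : 0 < N) (S : Multiset GaussianInt)
    {rep : (q : GaussianInt) → (GaussianInt ⧸ Ideal.span {q})ˣ → GaussianInt}
    (hrep : ∀ q u, Ideal.Quotient.mk (Ideal.span {q}) (rep q u) = u) :
    ((sSup {m : ℕ | ∃ q1 ∈ S, (Q / 2 < gN q1 ∧ gN q1 ≤ Q) ∧
        ∃ u1 : (GaussianInt ⧸ Ideal.span {q1})ˣ,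
          m = closeFractionCount rep Q N S q1 (rep q1 u1)} : ℕ) : ℝ)
      ≤ (c * c)⁻¹ * sSup {v : ℝ | ∃ q1 ∈ S, (Q / 2 < gN q1 ∧ gN q1 ≤ Q) ∧
          ∃ u1 : (GaussianInt ⧸ Ideal.span {q1})ˣ,
            v = smoothedSum Φ₁ Φ₂ Q N S q1 (rep q1 u1)} := by
  have hrep_inj (q : GaussianInt) : Function.Injective (rep q) := fun u v huv =>
    Units.ext <| by rw [← hrep q u, ← hrep q v, huv]
  have hne (q : GaussianInt) (hq : Q / 2 < gN q ∧ gN q ≤ Q) : q ≠ 0 :=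
    gN_pos.1 ((half_pos hQ).trans hq.1)
  refine natCast_sSup_le_mul_sSup
    (finite_setOf_reduced_residue_values S hne fun q u =>
      closeFractionCount rep Q N S q (rep q u)).bddAbove
    (finite_setOf_reduced_residue_values S hne fun q u =>
      smoothedSum Φ₁ Φ₂ Q N S q (rep q u)).bddAbove
    (by positivity) ?_ ?_
  · rintro _ ⟨q1, -, -, u1, rfl⟩
    exact smoothedSum_nonneg hΦ₁ hΦ₂ S q1 _
  · rintro _ ⟨q1, hq1S, hq1, u1, rfl⟩
    refine ⟨_, ⟨q1, hq1S, hq1, u1, rfl⟩, ?_⟩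
    rw [le_inv_mul_iff₀' (mul_pos hc hc)]
    exact closeFractionCount_mul_le_smoothedSum hrep_inj hc.le hΦ₁ hΦ₂ hk hdecay hlow₁ hlow₂ hQ hN S
      (hne q1 hq1) _

/-- **Bounding the counting quantity by smoothed sums** (inequality (14)/(15) of the paper).
For smooth, positive, rapidly decaying `Φ₁, Φ₂ : ℝ → ℝ` with `Φᵢ ≥ c > 0` on `[-1,1]`,
setting `Ψᵢ = Φᵢ ∘ N`, there is `C = C(Φ₁,Φ₂,c) > 0` such that for all `Q, N ≥ 1`, every
finite multiset `S` of nonzero Gaussian integers, and any fixed system of representatives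
of reduced residues (given by `rep`): the counting quantity `K` satisfies
`K ≤ C · max_{q₁,r₁} ∑_{q₂∈S} Ψ₂(q₂/√Q) ∑_{b ≡ r₁q₂ (q₁)} Ψ₁(b√N/(|q₁|√(2Q)))`. -/
theorem counting_bounded_by_smoothed_sums :
    ∀ (Φ₁ Φ₂ : ℝ → ℝ) (c : ℝ), 0 < c →
      (∀ x, 0 < Φ₁ x) → (∀ x, 0 < Φ₂ x) →
      ContDiff ℝ (⊤ : ℕ∞) Φ₁ → ContDiff ℝ (⊤ : ℕ∞) Φ₂ →
      (∃ C' > (1 : ℝ), ∃ A : ℝ, ∀ x : ℝ, Φ₁ x ≤ A * (1 + |x|) ^ (-C')) →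
      (∃ C' > (1 : ℝ), ∃ A : ℝ, ∀ x : ℝ, Φ₂ x ≤ A * (1 + |x|) ^ (-C')) →
      (∀ x : ℝ, |x| ≤ 1 → c ≤ Φ₁ x) → (∀ x : ℝ, |x| ≤ 1 → c ≤ Φ₂ x) →
      ∃ C : ℝ, 0 < C ∧
        ∀ (Q N : ℝ), 1 ≤ Q → 1 ≤ N →
        ∀ S : Multiset GaussianInt, (∀ q ∈ S, q ≠ 0) →
        ∀ rep : (q : GaussianInt) → (GaussianInt ⧸ Ideal.span {q})ˣ → GaussianInt,
        (∀ (q : GaussianInt) (u : (GaussianInt ⧸ Ideal.span {q})ˣ),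
          Ideal.Quotient.mk (Ideal.span {q}) (rep q u) = (u : GaussianInt ⧸ Ideal.span {q})) →
        ∀ K : ℕ,
        K = sSup {m : ℕ | ∃ q1 ∈ S, (Q / 2 < gN q1 ∧ gN q1 ≤ Q) ∧
              ∃ u1 : (GaussianInt ⧸ Ideal.span {q1})ˣ,
                m = ((S.filter (fun q2 => Q / 2 < gN q2 ∧ gN q2 ≤ Q)).map
                      (fun q2 => Nat.card {u2 : (GaussianInt ⧸ Ideal.span {q2})ˣ //
                        gN (rep q1 u1 * q2 - rep q2 u2 * q1)
                          ≤ 2 * N⁻¹ * gN q1 * gN q2})).sum} →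
        (K : ℝ) ≤ C * sSup {v : ℝ | ∃ q1 ∈ S, (Q / 2 < gN q1 ∧ gN q1 ≤ Q) ∧
              ∃ u1 : (GaussianInt ⧸ Ideal.span {q1})ˣ,
                v = (S.map (fun q2 : GaussianInt =>
                      Φ₂ (cN ((q2 : ℂ) / (Real.sqrt Q : ℝ))) *
                      ∑' b : {b : GaussianInt // q1 ∣ b - rep q1 u1 * q2},
                        Φ₁ (cN (((b : GaussianInt) : ℂ) * (Real.sqrt N : ℝ)
                          / ((Real.sqrt (gN q1) : ℝ) * (Real.sqrt (2 * Q) : ℝ)))))).sum} := by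
  intro Φ₁ Φ₂ c hc hpos₁ hpos₂ _ _ ⟨k, hk, A, hdecay⟩ _ hlow₁ hlow₂
  refine ⟨(c * c)⁻¹, by positivity, ?_⟩
  rintro Q N hQ hN S - rep hrep K rfl
  exact counting_bounded_by_smoothed_sums_general hc (fun x => (hpos₁ x).le) (fun x => (hpos₂ x).le)
    hk hdecay hlow₁ hlow₂ (by linarith) (by linarith) S hrep
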